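/- arXiv:2209.11075 — 2 statements merged into one kernel-verified Lean document; each statement's English description precedes it below -/
import Mathlib

section
/- Let r and s be integers with s ≠ 0, set α := r/s, let b be a positive integer, c := gcd(r, s, b), b' := b/c, and s' := s/c. Let n ∈ ℤ be such that (q^r; q^s)_n is well-defined and non-zero. Then v_{φ_b}((q^r; q^s)_n) = ⌊c·n/b − D_{b'}(α) − ⌊1−α⌋/b'⌋ + 1 if gcd(s', b') = 1, and v_{φ_b}((q^r; q^s)_n) = 0 otherwise. -/
open Polynomial
open scoped Classical

noncomputable section

/-- The generalized Dwork map `D_b(α)`: the unique rational whose reduced denominator is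
coprime to `b` and such that `b·D_b(α) − α ∈ {0, 1, …, b−1}`. -/
def dwork (b : ℕ) (α : ℚ) : ℚ :=
  if h : ∃ θ : ℚ, Nat.Coprime θ.den b ∧ ∃ k : ℤ, 0 ≤ k ∧ k < (b : ℤ) ∧ (b : ℚ) * θ - α = (k : ℚ)
  then h.choose else 0

/-- `α ∈ ℤ_{≤0}`. -/
def IsNonPosInt (α : ℚ) : Prop := ∃ m : ℤ, m ≤ 0 ∧ α = (m : ℚ)

/-- `α ∈ ℤ_{>0}`. -/
def IsPosInt (α : ℚ) : Prop := ∃ m : ℤ, 0 < m ∧ α = (m : ℚ)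

/-- `𝔫_α`. -/
def frakn (α : ℚ) : ℤ := if 0 ≤ α then α.num else |α.num| + 1

/-- `⟨x⟩`: the fractional part of `x` if `x ∉ ℤ`, and `1` if `x ∈ ℤ`. -/
def cangle (x : ℝ) : ℝ := if ∃ m : ℤ, x = (m : ℝ) then 1 else Int.fract x

/-- Christol order `x ⪯ y`. -/
def cle (x y : ℝ) : Prop := cangle x < cangle y ∨ (cangle x = cangle y ∧ y ≤ x)

/-- The step function `δ_b(r, s, ·)`. -/
def qdelta (b : ℕ) (r s : ℤ) (x : ℝ) : ℤ :=
  if Int.gcd (s / (Nat.gcd (Int.gcd r s) b : ℤ)) (((b / Nat.gcd (Int.gcd r s) b : ℕ)) : ℤ) = 1 then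
    ⌊(Nat.gcd (Int.gcd r s) b : ℝ) * x
        - ((dwork (b / Nat.gcd (Int.gcd r s) b) ((r : ℚ) / (s : ℚ)) : ℚ) : ℝ)
        - ((⌊1 - (r : ℚ) / (s : ℚ)⌋ : ℤ) : ℝ) / ((b / Nat.gcd (Int.gcd r s) b : ℕ) : ℝ)⌋ + 1
  else 0

/-- The Landau-type step function `Δ_b^{𝐫,𝐭}`. -/
def qDeltaFn {v w : ℕ} (b : ℕ) (rr : Fin v → ℤ × ℤ) (tt : Fin w → ℤ × ℤ) (x : ℝ) : ℤ :=
  (∑ i, qdelta b (rr i).1 (rr i).2 x) - (∑ j, qdelta b (tt j).1 (tt j).2 x)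

/-- The q-Pochhammer symbol `(q^r; q^s)_n` for `n ∈ ℕ`, inside `ℚ(q)`. -/
def qPoch (r s : ℤ) (n : ℕ) : RatFunc ℚ :=
  ∏ i ∈ Finset.range n, (1 - RatFunc.X ^ (r + s * (i : ℤ)))

/-- The q-Pochhammer symbol `(q^r; q^s)_n` for `n ∈ ℤ`. -/
def qPochZ (r s : ℤ) (n : ℤ) : RatFunc ℚ :=
  if 0 ≤ n then qPoch r s n.toNat else (qPoch (r - s) (-s) (-n).toNat)⁻¹

/-- Multiplicity of `p` in `g`: the largest `k` with `p^k ∣ g`. -/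
def polyMult (p g : Polynomial ℚ) : ℕ := sSup {k : ℕ | p ^ k ∣ g}

/-- The valuation `v_{φ_b}` on `ℚ(q)` attached to the `b`-th cyclotomic polynomial. -/
def cycVal (b : ℕ) (f : RatFunc ℚ) : ℤ :=
  (polyMult (cyclotomic b ℚ) f.num : ℤ) - (polyMult (cyclotomic b ℚ) f.denom : ℤ)

/-- The image of an integer polynomial in `ℚ(q)`. -/
def polyZ (g : Polynomial ℤ) : RatFunc ℚ :=
  algebraMap (Polynomial ℚ) (RatFunc ℚ) (g.map (Int.castRingHom ℚ))

/-- `f ∈ ℤ[q⁻¹, q]`. -/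
def IsIntLaurent (f : RatFunc ℚ) : Prop :=
  ∃ (m : ℕ) (g : Polynomial ℤ), f * RatFunc.X ^ m = polyZ g

/-- `f ∈ ℤ[q]`. -/
def IsIntPoly (f : RatFunc ℚ) : Prop := ∃ g : Polynomial ℤ, f = polyZ g

/-- The ratio attached to a pair of integers. -/
def ratOf (p : ℤ × ℤ) : ℚ := (p.1 : ℚ) / (p.2 : ℚ)

/-- The q-hypergeometric term `Q_{𝐫,𝐭}(q; n)`, `n ∈ ℕ`. -/
def qHyp {v w : ℕ} (rr : Fin v → ℤ × ℤ) (tt : Fin w → ℤ × ℤ) (n : ℕ) : RatFunc ℚ :=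
  (∏ i, qPoch (rr i).1 (rr i).2 n) / (∏ j, qPoch (tt j).1 (tt j).2 n)

/-- The q-hypergeometric term `Q_{𝐫,𝐭}(q; n)`, `n ∈ ℤ`. -/
def qHypZ {v w : ℕ} (rr : Fin v → ℤ × ℤ) (tt : Fin w → ℤ × ℤ) (n : ℤ) : RatFunc ℚ :=
  (∏ i, qPochZ (rr i).1 (rr i).2 n) / (∏ j, qPochZ (tt j).1 (tt j).2 n)

/-- `c := gcd(r, s, b)`. -/
def cOf (p : ℤ × ℤ) (b : ℕ) : ℕ := Nat.gcd (Int.gcd p.1 p.2) b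

/-- Membership in `V_b` (resp. `W_b`): `gcd(s, b) = gcd(r, s, b)`. -/
def inV (p : ℤ × ℤ) (b : ℕ) : Prop := Nat.gcd p.2.natAbs b = cOf p b

/-- `d_{𝐫,𝐭}`: the lcm of all the `s_i` and `u_j`. -/
def dRT {v w : ℕ} (rr : Fin v → ℤ × ℤ) (tt : Fin w → ℤ × ℤ) : ℕ :=
  Nat.lcm (Finset.univ.lcm fun i => ((rr i).2).natAbs)
    (Finset.univ.lcm fun j => ((tt j).2).natAbs)

/-- `b̃`: the greatest divisor of `b` coprime to `d`. -/
def btilde (d b : ℕ) : ℕ := Nat.findGreatest (fun k => k ∣ b ∧ Nat.Coprime k d) b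

/-- The unique `a ∈ {1,…,d}` with `a·b̃ ≡ 1 (mod d)`. -/
def aOf (d b : ℕ) : ℕ :=
  if h : ∃ a, 1 ≤ a ∧ a ≤ d ∧ (a * btilde d b) % d = 1 % d then h.choose else 1

/-- The representative of `b` modulo `d` lying in `{1,…,d}`. -/
def repMod (d b : ℕ) : ℕ := if b % d = 0 then d else b % d

/-- The jump abscissa `(⟨e·α⟩ + k)/c − ⌊1 − a·α⌋`. -/
def jumpPt (p : ℤ × ℤ) (b : ℕ) (a ei : ℤ) (k : ℕ) : ℝ :=
  (cangle (((ei : ℚ) * ratOf p : ℚ) : ℝ) + (k : ℝ)) / (cOf p b : ℝ)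
    - ((⌊1 - (a : ℚ) * ratOf p⌋ : ℤ) : ℝ)

/-- Number of pairs `(i,k)` with jump abscissa `⪯ x` coming from one pair `p`. -/
def XiCount (p : ℤ × ℤ) (b : ℕ) (a ei : ℤ) (x : ℝ) : ℕ :=
  if inV p b then ((Finset.range (cOf p b)).filter fun k => cle (jumpPt p b a ei k) x).card else 0

/-- The generalized Christol step function `Ξ_{𝐫,𝐭}(b, ·)`, relative to choices `e`, `f`. -/
def Xi {v w : ℕ} (rr : Fin v → ℤ × ℤ) (tt : Fin w → ℤ × ℤ) (b : ℕ)
    (e : Fin v → ℤ) (f : Fin w → ℤ) (x : ℝ) : ℤ :=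
  (∑ i, (XiCount (rr i) b ((aOf (dRT rr tt) b : ℕ) : ℤ) (e i) x : ℤ))
    - (∑ j, (XiCount (tt j) b ((aOf (dRT rr tt) b : ℕ) : ℤ) (f j) x : ℤ))

/-- `ei` is an admissible choice for the pair `p` and `b`: positive with `b·ei ≡ c (mod s)`. -/
def goodChoice (p : ℤ × ℤ) (b : ℕ) (ei : ℤ) : Prop :=
  inV p b → 0 < ei ∧ p.2 ∣ ((b : ℤ) * ei - (cOf p b : ℤ))

end

/-!
Both sides of the identity, as functions of `n`, vanish at `n = 0` and grow by `1` or `0` from `n`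
to `n + 1` according to whether `b` divides `r + s * n`. On the left this is the recursion
`(q^r; q^s)_{n+1} = (q^r; q^s)_n * (1 - q^{r+sn})`, because `φ_b` divides `1 - q^m` exactly once if
`b ∣ m` and not at all otherwise. On the right one divides `r`, `s`, `b` by their gcd. If then
`gcd(s, b) > 1`, no `r + s * n` is divisible by `b`. Otherwise `b * D_b(r/s) - r/s` is the residue
`k` of `-r/s` modulo `b`, and the right-hand side becomes `⌊(n - k - 1) / b⌋ + 1`.
-/

section PolyMult

variable {p g h : ℚ[X]}

theorem polyMult_eq_multiplicity (hpg : FiniteMultiplicity p g) :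
    polyMult p g = multiplicity p g := by
  have hset : {k : ℕ | p ^ k ∣ g} = Set.Iic (multiplicity p g) :=
    Set.ext fun _ => hpg.pow_dvd_iff_le_multiplicity
  rw [polyMult, hset, csSup_Iic]

theorem polyMult_mul (hp : Prime p) (hg : g ≠ 0) (hh : h ≠ 0) :
    polyMult p (g * h) = polyMult p g + polyMult p h := by
  have hgh := FiniteMultiplicity.of_prime_left hp (mul_ne_zero hg hh)
  rw [polyMult_eq_multiplicity (.of_prime_left hp hg),
    polyMult_eq_multiplicity (.of_prime_left hp hh), polyMult_eq_multiplicity hgh,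
    multiplicity_mul hp hgh]

theorem polyMult_neg (p g : ℚ[X]) : polyMult p (-g) = polyMult p g := by
  simp only [polyMult, dvd_neg]

theorem polyMult_eq_zero (hpg : ¬ p ∣ g) : polyMult p g = 0 := by
  rw [polyMult_eq_multiplicity ⟨0, by simpa using hpg⟩, multiplicity_eq_zero.mpr hpg]

theorem polyMult_eq_one (hp : ¬ IsUnit p) (hg : Squarefree g) (hpg : p ∣ g) :
    polyMult p g = 1 := by
  have hsq : ¬ p ^ (1 + 1) ∣ g := fun hdvd => hp (hg p (by simpa [pow_two] using hdvd))
  rw [polyMult_eq_multiplicity ⟨1, hsq⟩,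
    multiplicity_eq_of_dvd_of_not_dvd (by simpa using hpg) hsq]

end PolyMult

section Cyclotomic

variable {b : ℕ}

theorem prime_cyclotomic_rat (hb : 0 < b) : Prime (cyclotomic b ℚ) :=
  (cyclotomic.irreducible_rat hb).prime

theorem cyclotomic_rat_dvd_iff_aeval {K : Type*} [Field K] [CharZero K] {ζ : K}
    (hζ : IsPrimitiveRoot ζ b) (hb : 0 < b) (g : ℚ[X]) : cyclotomic b ℚ ∣ g ↔ aeval ζ g = 0 := by
  rw [cyclotomic_eq_minpoly_rat hζ hb, minpoly.dvd_iff]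

theorem cyclotomic_rat_dvd_X_pow_sub_one_iff (hb : 0 < b) (k : ℕ) :
    cyclotomic b ℚ ∣ X ^ k - 1 ↔ b ∣ k := by
  have hζ := Complex.isPrimitiveRoot_exp b hb.ne'
  rw [cyclotomic_rat_dvd_iff_aeval hζ hb, ← hζ.pow_eq_one_iff_dvd]
  simp [sub_eq_zero]

theorem not_cyclotomic_rat_dvd_X_pow (hb : 0 < b) (k : ℕ) : ¬ cyclotomic b ℚ ∣ X ^ k := by
  have hζ := Complex.isPrimitiveRoot_exp b hb.ne'
  rw [cyclotomic_rat_dvd_iff_aeval hζ hb, map_pow, aeval_X]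
  exact pow_ne_zero k (hζ.ne_zero hb.ne')

theorem polyMult_cyclotomic_X_pow_sub_one (hb : 0 < b) {k : ℕ} (hk : k ≠ 0) :
    polyMult (cyclotomic b ℚ) (X ^ k - 1) = if b ∣ k then 1 else 0 := by
  have hsep : (X ^ k - 1 : ℚ[X]).Separable :=
    X_pow_sub_one_separable_iff.mpr (by exact_mod_cast hk)
  split_ifs with h
  · exact polyMult_eq_one (prime_cyclotomic_rat hb).not_isUnit hsep.squarefree
      ((cyclotomic_rat_dvd_X_pow_sub_one_iff hb k).mpr h)
  · exact polyMult_eq_zero (mt (cyclotomic_rat_dvd_X_pow_sub_one_iff hb k).mp h)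

end Cyclotomic

section CycVal

variable {b : ℕ}

theorem cycVal_mul (hb : 0 < b) {x y : RatFunc ℚ} (hx : x ≠ 0) (hy : y ≠ 0) :
    cycVal b (x * y) = cycVal b x + cycVal b y := by
  have hp := prime_cyclotomic_rat hb
  have hmul := congrArg (polyMult (cyclotomic b ℚ)) (RatFunc.num_denom_mul x y)
  rw [polyMult_mul hp (RatFunc.num_ne_zero (mul_ne_zero hx hy))
      (mul_ne_zero x.denom_ne_zero y.denom_ne_zero),
    polyMult_mul hp x.denom_ne_zero y.denom_ne_zero,
    polyMult_mul hp (mul_ne_zero (RatFunc.num_ne_zero hx) (RatFunc.num_ne_zero hy))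
      (x * y).denom_ne_zero,
    polyMult_mul hp (RatFunc.num_ne_zero hx) (RatFunc.num_ne_zero hy)] at hmul
  unfold cycVal
  lia

theorem cycVal_algebraMap (hb : 0 < b) (g : ℚ[X]) :
    cycVal b (algebraMap ℚ[X] (RatFunc ℚ) g) = polyMult (cyclotomic b ℚ) g := by
  have h_one : polyMult (cyclotomic b ℚ) 1 = 0 :=
    polyMult_eq_zero (by simpa using not_cyclotomic_rat_dvd_X_pow hb 0)
  rw [cycVal, RatFunc.num_algebraMap, RatFunc.denom_algebraMap, h_one, Nat.cast_zero, sub_zero]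

theorem cycVal_one (hb : 0 < b) : cycVal b 1 = 0 := by
  simpa using cycVal_mul hb (one_ne_zero (α := RatFunc ℚ)) one_ne_zero

theorem cycVal_inv (hb : 0 < b) {x : RatFunc ℚ} (hx : x ≠ 0) : cycVal b x⁻¹ = -cycVal b x := by
  have h := cycVal_mul hb hx (inv_ne_zero hx)
  rw [mul_inv_cancel₀ hx, cycVal_one hb] at h
  lia

theorem X_pow_sub_one_ne_zero {R : Type*} [Ring R] [Nontrivial R] {k : ℕ} (hk : k ≠ 0) :
    (X ^ k - 1 : R[X]) ≠ 0 :=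
  (monic_X_pow_sub_C (1 : R) hk).ne_zero

theorem one_sub_X_zpow_ne_zero {K : Type*} [Field K] {m : ℤ} (hm : m ≠ 0) :
    (1 - RatFunc.X ^ m : RatFunc K) ≠ 0 := by
  have hX_pow {k : ℕ} (hk : k ≠ 0) : (RatFunc.X : RatFunc K) ^ k ≠ 1 := by
    simpa [sub_eq_zero] using RatFunc.algebraMap_ne_zero (X_pow_sub_one_ne_zero (R := K) hk)
  rw [sub_ne_zero, ne_comm]
  obtain ⟨k, rfl | rfl⟩ := m.eq_nat_or_neg
  · simpa using hX_pow (by simpa using hm)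
  · simpa using hX_pow (by simpa using hm)

theorem cycVal_one_sub_X_zpow (hb : 0 < b) {m : ℤ} (hm : m ≠ 0) :
    cycVal b (1 - RatFunc.X ^ m) = if (b : ℤ) ∣ m then 1 else 0 := by
  obtain ⟨k, rfl | rfl⟩ := m.eq_nat_or_neg
  · have hk : k ≠ 0 := by simpa using hm
    have h : (1 - RatFunc.X ^ (k : ℤ) : RatFunc ℚ) =
        algebraMap ℚ[X] (RatFunc ℚ) (-(X ^ k - 1)) := by simp
    rw [h, cycVal_algebraMap hb, polyMult_neg, polyMult_cyclotomic_X_pow_sub_one hb hk]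
    simp [Int.natCast_dvd_natCast]
  · have hk : k ≠ 0 := by simpa using hm
    have hX : algebraMap ℚ[X] (RatFunc ℚ) (X ^ k) ≠ 0 :=
      RatFunc.algebraMap_ne_zero (pow_ne_zero k X_ne_zero)
    have h : (1 - RatFunc.X ^ (-(k : ℤ)) : RatFunc ℚ) =
        algebraMap ℚ[X] (RatFunc ℚ) (X ^ k - 1) * (algebraMap ℚ[X] (RatFunc ℚ) (X ^ k))⁻¹ := by
      rw [map_sub, map_one, sub_mul, mul_inv_cancel₀ hX]
      simp
    rw [h, cycVal_mul hb (RatFunc.algebraMap_ne_zero (X_pow_sub_one_ne_zero hk)) (inv_ne_zero hX),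
      cycVal_inv hb hX, cycVal_algebraMap hb, cycVal_algebraMap hb,
      polyMult_cyclotomic_X_pow_sub_one hb hk,
      polyMult_eq_zero (not_cyclotomic_rat_dvd_X_pow hb k)]
    simp [Int.natCast_dvd_natCast]

end CycVal

section QPochhammer

variable {b : ℕ} {r s n : ℤ}

theorem qPoch_add_one (r s : ℤ) (k : ℕ) :
    qPoch r s (k + 1) = qPoch r s k * (1 - RatFunc.X ^ (r + s * (k : ℤ))) :=
  Finset.prod_range_succ _ _

theorem qPochZ_natCast (r s : ℤ) (k : ℕ) : qPochZ r s k = qPoch r s k := by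
  simp [qPochZ]

theorem qPochZ_neg_natCast (r s : ℤ) (k : ℕ) : qPochZ r s (-k) = (qPoch (r - s) (-s) k)⁻¹ := by
  rcases k.eq_zero_or_pos with rfl | hk
  · simp [qPochZ, qPoch]
  · rw [qPochZ, if_neg (by lia), neg_neg, Int.toNat_natCast]

theorem qPochZ_add_one (hn : r + s * n ≠ 0) :
    qPochZ r s (n + 1) = qPochZ r s n * (1 - RatFunc.X ^ (r + s * n)) := by
  rcases le_or_gt 0 n with h | h
  · lift n to ℕ using h
    rw [← Nat.cast_succ, qPochZ_natCast, qPochZ_natCast, qPoch_add_one]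
  · obtain ⟨k, rfl⟩ : ∃ k : ℕ, n = -((k + 1 : ℕ) : ℤ) := ⟨(-n - 1).toNat, by lia⟩
    have hexp : r - s + -s * (k : ℤ) = r + s * -((k + 1 : ℕ) : ℤ) := by push_cast; ring
    rw [show -((k + 1 : ℕ) : ℤ) + 1 = -k by lia, qPochZ_neg_natCast, qPochZ_neg_natCast,
      qPoch_add_one, hexp, mul_inv, inv_mul_cancel_right₀ (one_sub_X_zpow_ne_zero hn)]

theorem qPoch_ne_zero {k : ℕ} (h : ∀ i < k, r + s * (i : ℤ) ≠ 0) : qPoch r s k ≠ 0 :=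
  Finset.prod_ne_zero_iff.mpr fun i hi => one_sub_X_zpow_ne_zero (h i (Finset.mem_range.mp hi))

theorem qPochZ_ne_zero (h : ∀ i ∈ Set.Ico (min 0 n) (max 0 n), r + s * i ≠ 0) :
    qPochZ r s n ≠ 0 := by
  obtain ⟨k, rfl | rfl⟩ := n.eq_nat_or_neg
  · rw [qPochZ_natCast]
    exact qPoch_ne_zero fun i hi => h i ⟨by lia, by lia⟩
  · rw [qPochZ_neg_natCast]
    refine inv_ne_zero (qPoch_ne_zero fun i hi => ?_)
    rw [show r - s + -s * (i : ℤ) = r + s * (-i - 1) by ring]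
    exact h _ ⟨by lia, by lia⟩

theorem cycVal_qPochZ_add_one (hb : 0 < b)
    (h : ∀ i ∈ Set.Ico (min 0 n) (max 0 n), r + s * i ≠ 0) (hn : r + s * n ≠ 0) :
    cycVal b (qPochZ r s (n + 1)) =
      cycVal b (qPochZ r s n) + if (b : ℤ) ∣ r + s * n then 1 else 0 := by
  rw [qPochZ_add_one hn, cycVal_mul hb (qPochZ_ne_zero h) (one_sub_X_zpow_ne_zero hn),
    cycVal_one_sub_X_zpow hb hn]

theorem cycVal_qPochZ_eq_of_add_one (hb : 0 < b) {F : ℤ → ℤ} (hF_zero : F 0 = 0)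
    (hF_add_one : ∀ m, F (m + 1) = F m + if (b : ℤ) ∣ r + s * m then 1 else 0)
    (h : ∀ i ∈ Set.Ico (min 0 n) (max 0 n), r + s * i ≠ 0) :
    cycVal b (qPochZ r s n) = F n := by
  induction n using Int.induction_on with
  | zero => simpa [qPochZ, qPoch, hF_zero] using cycVal_one hb
  | succ k ih =>
    have hk : ∀ i ∈ Set.Ico (min 0 (k : ℤ)) (max 0 k), r + s * i ≠ 0 :=
      fun i hi => h i (Set.Ico_subset_Ico (by lia) (by lia) hi)
    rw [cycVal_qPochZ_add_one hb hk (h k ⟨by lia, by lia⟩), ih hk, hF_add_one]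
  | pred k ih =>
    have hk : ∀ i ∈ Set.Ico (min 0 (-(k : ℤ))) (max 0 (-k)), r + s * i ≠ 0 :=
      fun i hi => h i (Set.Ico_subset_Ico (by lia) (by lia) hi)
    have hval := cycVal_qPochZ_add_one hb h (h _ ⟨by lia, by lia⟩)
    have hF := hF_add_one (-k - 1)
    rw [sub_add_cancel] at hval hF
    linarith [ih hk]

theorem add_mul_ne_zero_of_mem_Ico (hs : s ≠ 0)
    (hwf : n < 0 → (¬ IsPosInt ((r : ℚ) / (s : ℚ)) ∨ -((r : ℚ) / (s : ℚ)) < (n : ℚ)))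
    (hnz : 0 ≤ n → (¬ IsNonPosInt ((r : ℚ) / (s : ℚ)) ∨ (n : ℚ) ≤ -((r : ℚ) / (s : ℚ))))
    {i : ℤ} (hi : i ∈ Set.Ico (min 0 n) (max 0 n)) : r + s * i ≠ 0 := by
  intro h
  obtain ⟨hi_left, hi_right⟩ := hi
  have hratio : (r : ℚ) / s = ((-i : ℤ) : ℚ) := by
    rw [div_eq_iff (by exact_mod_cast hs)]
    exact_mod_cast (by linarith : r = -i * s)
  rw [hratio] at hwf hnz
  rcases lt_or_ge n 0 with hn | hn
  · rcases hwf hn with hpos | hlt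
    · exact hpos ⟨-i, by lia, rfl⟩
    · have : -(-i) < n := by exact_mod_cast hlt
      lia
  · rcases hnz hn with hnonpos | hle
    · exact hnonpos ⟨-i, by lia, rfl⟩
    · have : n ≤ -(-i) := by exact_mod_cast hle
      lia

end QPochhammer

section Dwork

variable {b : ℕ}

theorem exists_dvd_add_mul {r s : ℤ} (hb : 0 < b) (hsb : IsCoprime s (b : ℤ)) :
    ∃ k : ℤ, 0 ≤ k ∧ k < b ∧ (b : ℤ) ∣ r + s * k := by
  obtain ⟨u, w, huw⟩ := hsb
  have hbZ : (0 : ℤ) < b := by exact_mod_cast hb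
  refine ⟨-r * u % b, Int.emod_nonneg _ hbZ.ne', Int.emod_lt_of_pos _ hbZ,
    r * w - s * (-r * u / b), ?_⟩
  linear_combination s * Int.emod_add_mul_ediv (-r * u) b - r * huw

theorem dwork_spec (hb : 0 < b) {α : ℚ} (hα : α.den.Coprime b) :
    (dwork b α).den.Coprime b ∧
      ∃ k : ℤ, 0 ≤ k ∧ k < b ∧ (b : ℚ) * dwork b α - α = k := by
  have hex : ∃ θ : ℚ, θ.den.Coprime b ∧
      ∃ k : ℤ, 0 ≤ k ∧ k < (b : ℤ) ∧ (b : ℚ) * θ - α = (k : ℚ) := by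
    obtain ⟨k, hk_nonneg, hk_lt, t, ht⟩ :=
      exists_dvd_add_mul (r := α.num) hb (Nat.isCoprime_iff_coprime.mpr hα)
    have hden : ((t : ℚ) / (α.den : ℤ)).den ∣ α.den := by
      rw [← Rat.divInt_eq_div]
      exact_mod_cast Rat.den_dvd t α.den
    refine ⟨_, hα.coprime_dvd_left hden, k, hk_nonneg, hk_lt, ?_⟩
    have htQ : (α.num : ℚ) + α.den * k = b * t := by exact_mod_cast ht
    have hden_ne : (α.den : ℚ) ≠ 0 := by exact_mod_cast α.den_ne_zero
    rw [Int.cast_natCast]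
    field_simp
    linear_combination -htQ - Rat.mul_den_eq_num α
  rw [dwork, dif_pos hex]
  exact hex.choose_spec

theorem dvd_add_mul_of_mul_sub_div_eq {r s k : ℤ} (hs : s ≠ 0) {θ : ℚ} (hθ : θ.den.Coprime b)
    (hk : (b : ℚ) * θ - (r : ℚ) / s = k) : (b : ℤ) ∣ r + s * k := by
  have hsQ : (s : ℚ) ≠ 0 := by exact_mod_cast hs
  have hnum : (b : ℚ) * θ * s = r + s * k := by
    rw [← hk]
    field_simp
    ring
  have hmul : (θ.den : ℚ) * (r + s * k) = b * (θ.num * s) := by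
    linear_combination -(θ.den : ℚ) * hnum + b * s * Rat.mul_den_eq_num θ
  exact (Nat.isCoprime_iff_coprime.mpr hθ).symm.dvd_of_dvd_mul_left ⟨_, by exact_mod_cast hmul⟩

theorem coprime_den_intCast_div {r s : ℤ} (hsb : Int.gcd s b = 1) :
    ((r : ℚ) / s).den.Coprime b := by
  have hden : (((r : ℚ) / s).den : ℤ) ∣ s := Rat.divInt_eq_div r s ▸ Rat.den_dvd r s
  exact Nat.isCoprime_iff_coprime.mp
    ((Int.isCoprime_iff_gcd_eq_one.mpr hsb).of_isCoprime_of_dvd_left hden)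

end Dwork

section StepFunction

variable {b : ℕ} {r s : ℤ}

theorem qdelta_mul {c : ℕ} (hc : 0 < c) (b : ℕ) (r s : ℤ) (x : ℝ) :
    qdelta (c * b) (c * r) (c * s) x = qdelta b r s (c * x) := by
  have hcZ : (0 : ℤ) < c := by exact_mod_cast hc
  have hcQ : (c : ℚ) ≠ 0 := by exact_mod_cast hc.ne'
  have hgcd : Nat.gcd (Int.gcd (c * r) (c * s)) (c * b) = c * Nat.gcd (Int.gcd r s) b := by
    rw [Int.gcd_mul_left, Int.natAbs_natCast, Nat.gcd_mul_left]
  have hratio : ((c * r : ℤ) : ℚ) / ((c * s : ℤ) : ℚ) = (r : ℚ) / s := by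
    push_cast
    exact mul_div_mul_left _ _ hcQ
  unfold qdelta
  rw [hgcd, hratio, Nat.mul_div_mul_left _ _ hc, Nat.cast_mul, Int.mul_ediv_mul_of_pos _ _ hcZ,
    Nat.cast_mul, mul_comm (c : ℝ), mul_assoc]

theorem exists_qdelta_eq_ediv (hb : 0 < b) (hs : s ≠ 0) (hsb : Int.gcd s b = 1) :
    ∃ k : ℤ, 0 ≤ k ∧ k < b ∧ (b : ℤ) ∣ r + s * k ∧
      ∀ n : ℤ, qdelta b r s ((n : ℝ) / b) = (n - k - 1) / (b : ℤ) + 1 := by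
  obtain ⟨hden, k, hk_nonneg, hk_lt, hk⟩ := dwork_spec hb (coprime_den_intCast_div (r := r) hsb)
  refine ⟨k, hk_nonneg, hk_lt, dvd_add_mul_of_mul_sub_div_eq hs hden hk, fun n => ?_⟩
  have hgcd : Nat.gcd (Int.gcd r s) b = 1 :=
    Nat.Coprime.coprime_dvd_left (Int.gcd_dvd_natAbs_right r s) hsb
  simp only [qdelta, hgcd, Nat.cast_one, Int.ediv_one, Nat.div_one, hsb, if_true, one_mul]
  set α := (r : ℚ) / s
  have hbR : (b : ℝ) ≠ 0 := by exact_mod_cast hb.ne'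
  have hkR : (b : ℝ) * (dwork b α : ℝ) - (α : ℝ) = k := by exact_mod_cast hk
  have hnum : (n : ℝ) / b - (dwork b α : ℝ) - (⌊1 - α⌋ : ℝ) / b =
      (((n - k - 1 - ⌊1 - α⌋ : ℤ) : ℝ) + ((1 - α : ℚ) : ℝ)) / b := by
    push_cast
    field_simp
    linear_combination -hkR
  rw [hnum, Int.floor_div_natCast, Int.floor_intCast_add, Rat.floor_cast, sub_add_cancel]

theorem qdelta_eq_zero (hgcd : Nat.gcd (Int.gcd r s) b = 1) (hsb : Int.gcd s b ≠ 1) (x : ℝ) :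
    qdelta b r s x = 0 := by
  rw [qdelta, hgcd, Nat.cast_one, Int.ediv_one, Nat.div_one, if_neg hsb]

theorem not_dvd_add_mul_of_gcd_ne_one (hgcd : Nat.gcd (Int.gcd r s) b = 1)
    (hsb : Int.gcd s b ≠ 1) (m : ℤ) : ¬ (b : ℤ) ∣ r + s * m := by
  intro hdvd
  have hgs : (Int.gcd s b : ℤ) ∣ s := Int.gcd_dvd_left _ _
  have hgb : (Int.gcd s b : ℤ) ∣ b := Int.gcd_dvd_right _ _
  have hgr : (Int.gcd s b : ℤ) ∣ r := (dvd_add_left (hgs.mul_right m)).mp (hgb.trans hdvd)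
  refine hsb (Nat.dvd_one.mp (hgcd ▸ Nat.dvd_gcd (Int.dvd_gcd hgr hgs) ?_))
  exact_mod_cast hgb

theorem add_one_ediv {d : ℤ} (hd : 0 < d) (m : ℤ) :
    (m + 1) / d = m / d + if d ∣ m + 1 then 1 else 0 := by
  have hle := Int.mul_ediv_self_le (x := m) hd.ne'
  have hlt := Int.lt_mul_ediv_self_add (x := m) hd
  split_ifs with h
  · obtain ⟨t, ht⟩ := h
    have hm : m / d = t - 1 := (Int.ediv_eq_iff_of_pos hd).mpr ⟨by linarith, by linarith⟩
    rw [ht, Int.mul_ediv_cancel_left t hd.ne', hm, sub_add_cancel]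
  · have hne : m + 1 ≠ d * (m / d) + d := fun heq => h ⟨m / d + 1, by linarith⟩
    rw [add_zero, Int.ediv_eq_iff_of_pos hd, mul_comm]
    exact ⟨by lia, by lia⟩

theorem dvd_add_mul_iff_dvd_sub {R : Type*} [CommRing R] {r s d k : R} (hsd : IsCoprime s d)
    (hk : d ∣ r + s * k) (m : R) : d ∣ r + s * m ↔ d ∣ m - k := by
  rw [show r + s * m = r + s * k + s * (m - k) by ring, dvd_add_right hk]
  exact ⟨hsd.symm.dvd_of_dvd_mul_left, fun h => h.mul_left s⟩

theorem qdelta_zero_of_gcd_eq_one (hb : 0 < b) (hs : s ≠ 0)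
    (hgcd : Nat.gcd (Int.gcd r s) b = 1) : qdelta b r s 0 = 0 := by
  by_cases hsb : Int.gcd s b = 1
  · obtain ⟨k, hk_nonneg, hk_lt, -, hq⟩ := exists_qdelta_eq_ediv (r := r) hb hs hsb
    have hdiv : (0 - k - 1) / (b : ℤ) = -1 :=
      (Int.ediv_eq_iff_of_pos (by lia)).mpr ⟨by lia, by lia⟩
    have hq_zero := hq 0
    rwa [hdiv, Int.cast_zero, zero_div, neg_add_cancel] at hq_zero
  · exact qdelta_eq_zero hgcd hsb 0

theorem qdelta_add_one_of_gcd_eq_one (hb : 0 < b) (hs : s ≠ 0)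
    (hgcd : Nat.gcd (Int.gcd r s) b = 1) (m : ℤ) :
    qdelta b r s (((m + 1 : ℤ) : ℝ) / b) =
      qdelta b r s ((m : ℝ) / b) + if (b : ℤ) ∣ r + s * m then 1 else 0 := by
  by_cases hsb : Int.gcd s b = 1
  · obtain ⟨k, -, -, hdvd, hq⟩ := exists_qdelta_eq_ediv (r := r) hb hs hsb
    have hstep := add_one_ediv (d := b) (by exact_mod_cast hb) (m - k - 1)
    rw [sub_add_cancel] at hstep
    simp only [hq, dvd_add_mul_iff_dvd_sub (Int.isCoprime_iff_gcd_eq_one.mpr hsb) hdvd]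
    rw [show m + 1 - k - 1 = m - k by ring, hstep]
    ring
  · rw [qdelta_eq_zero hgcd hsb, qdelta_eq_zero hgcd hsb,
      if_neg (not_dvd_add_mul_of_gcd_ne_one hgcd hsb m), add_zero]

theorem exists_eq_mul_gcd_eq_one (hb : 0 < b) (r s : ℤ) :
    ∃ (c b' : ℕ) (r' s' : ℤ), 0 < c ∧ Nat.gcd (Int.gcd r' s') b' = 1 ∧
      b = c * b' ∧ r = c * r' ∧ s = c * s' := by
  set c := Nat.gcd (Int.gcd r s) b
  have hc : 0 < c := Nat.gcd_pos_of_pos_right _ hb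
  have hc_dvd : (c : ℤ) ∣ Int.gcd r s := by exact_mod_cast Nat.gcd_dvd_left _ _
  obtain ⟨r', hr⟩ := hc_dvd.trans (Int.gcd_dvd_left r s)
  obtain ⟨s', hs⟩ := hc_dvd.trans (Int.gcd_dvd_right r s)
  obtain ⟨b', hb'⟩ : c ∣ b := Nat.gcd_dvd_right _ _
  refine ⟨c, b', r', s', hc, Nat.eq_of_mul_eq_mul_left hc ?_, hb', hr, hs⟩
  rw [mul_one, ← Nat.gcd_mul_left, ← Int.natAbs_natCast c, ← Int.gcd_mul_left,
    Int.natAbs_natCast, ← hr, ← hs, ← hb']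

theorem qdelta_zero (hb : 0 < b) (hs : s ≠ 0) : qdelta b r s 0 = 0 := by
  obtain ⟨c, b, r, s, hc, hgcd, rfl, rfl, rfl⟩ := exists_eq_mul_gcd_eq_one hb r s
  rw [qdelta_mul hc, mul_zero]
  exact qdelta_zero_of_gcd_eq_one (Nat.pos_of_mul_pos_left hb) (right_ne_zero_of_mul hs) hgcd

theorem qdelta_add_one (hb : 0 < b) (hs : s ≠ 0) (m : ℤ) :
    qdelta b r s (((m + 1 : ℤ) : ℝ) / b) =
      qdelta b r s ((m : ℝ) / b) + if (b : ℤ) ∣ r + s * m then 1 else 0 := by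
  obtain ⟨c, b, r, s, hc, hgcd, rfl, rfl, rfl⟩ := exists_eq_mul_gcd_eq_one hb r s
  have hcR : (c : ℝ) ≠ 0 := by exact_mod_cast hc.ne'
  have harg (x : ℝ) : c * (x / (c * b : ℕ)) = x / b := by
    rw [Nat.cast_mul, mul_div_assoc', mul_div_mul_left _ _ hcR]
  have hdvd : ((c * b : ℕ) : ℤ) ∣ c * r + c * s * m ↔ (b : ℤ) ∣ r + s * m := by
    rw [mul_assoc, ← mul_add, Nat.cast_mul, mul_dvd_mul_iff_left (by exact_mod_cast hc.ne')]
  simp only [qdelta_mul hc, harg, hdvd]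
  exact qdelta_add_one_of_gcd_eq_one (Nat.pos_of_mul_pos_left hb) (right_ne_zero_of_mul hs) hgcd m

end StepFunction

/-- Theorem 1.3: the cyclotomic valuation of a q-Pochhammer symbol equals
`δ_b(r, s, n/b)`, i.e. `⌊c·n/b − D_{b'}(α) − ⌊1−α⌋/b'⌋ + 1` if `gcd(s', b') = 1` and `0`
otherwise. -/
theorem cycVal_qPochZ (r s : ℤ) (hs : s ≠ 0) (b : ℕ) (hb : 0 < b) (n : ℤ)
    (hwf : n < 0 → (¬ IsPosInt ((r : ℚ) / (s : ℚ)) ∨ -((r : ℚ) / (s : ℚ)) < (n : ℚ)))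
    (hnz : 0 ≤ n → (¬ IsNonPosInt ((r : ℚ) / (s : ℚ)) ∨ (n : ℚ) ≤ -((r : ℚ) / (s : ℚ)))) :
    cycVal b (qPochZ r s n) = qdelta b r s ((n : ℝ) / (b : ℝ)) := by
  have hfactors : ∀ i ∈ Set.Ico (min 0 n) (max 0 n), r + s * i ≠ 0 := fun _ hi =>
    add_mul_ne_zero_of_mem_Ico hs hwf hnz hi
  have hzero : qdelta b r s (((0 : ℤ) : ℝ) / b) = 0 := by
    rw [Int.cast_zero, zero_div, qdelta_zero hb hs]
  exact cycVal_qPochZ_eq_of_add_one hb (F := fun m => qdelta b r s ((m : ℝ) / b)) hzero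
    (qdelta_add_one hb hs) hfactors
end

section
/- Let 𝐫 = ((r_1,s_1),…,(r_v,s_v)) and 𝐭 = ((t_1,u_1),…,(t_w,u_w)) be vectors of pairs of integers such that all s_i, u_j ≠ 0 and all the ratios r_i/s_i and t_j/u_j do not belong to ℤ_{≤0}. Then the following are equivalent: (i) for all but finitely many positive integers b, the function Δ_b^{𝐫,𝐭} is non-negative on ℝ_{≥0}; (ii) for every b ∈ {1, …, d_{𝐫,𝐭}} and all x ∈ ℝ, Ξ_{𝐫,𝐭}(b, x) ≥ 0. -/
open Polynomial
open scoped Classical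

/-!
For large `b`, both `Δ_b` and `Ξ` are signed counts of the same finite family of jumps: their values
are the sums of the signs over the initial segments of the family, ordered by the abscissae of the
jumps of `Δ_b` in `(0, 1]`, respectively by the Christol order. Nonnegativity of all these sums
depends on the ordering alone, and the two orderings agree: the abscissa of a jump of `Δ_b` is a
base point in `(1/d)ℤ` plus `⌊1 - α⌋ / b`, so a large `b` leaves distinct base points in order, and
jumps with equal base points have ratios `α` that differ by an integer, in which case both `⌊1 - α⌋`
and `⌊1 - a·α⌋` order them by decreasing `α`. Finally, `Δ_b` is determined by its values on `[0, 1]`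
through `Δ_b(x + 1) = Δ_b(x) + Δ_b(1)`, and the data entering `Ξ` depend only on `b` modulo `d`,
except for `a`, of which only the positivity matters.
-/

lemma exists_eq_intCast_of_coprime_den {b : ℕ} {q : ℚ} (hq : q.den.Coprime b) {m : ℤ}
    (hm : (b : ℚ) * q = m) : ∃ z : ℤ, q = z := by
  obtain ⟨u, v, huv⟩ := Nat.isCoprime_iff_coprime.2 hq
  have huv' : (u : ℚ) * q.den + v * b = 1 := by exact_mod_cast huv
  refine ⟨u * q.num + v * m, ?_⟩
  push_cast
  linear_combination u * Rat.mul_den_eq_num q + v * hm - q * huv'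

/-- `θ` is a value at `α` of the Dwork map `D_b`: the property by which `dwork` selects it. -/
def IsDworkValue (b : ℕ) (α θ : ℚ) : Prop :=
  θ.den.Coprime b ∧ ∃ k : ℤ, 0 ≤ k ∧ k < (b : ℤ) ∧ (b : ℚ) * θ - α = k

namespace IsDworkValue

variable {b : ℕ} {α θ θ' : ℚ}

lemma unique (h : IsDworkValue b α θ) (h' : IsDworkValue b α θ') : θ = θ' := by
  obtain ⟨hco, k, hk0, hkb, hk⟩ := h
  obtain ⟨hco', k', hk0', hkb', hk'⟩ := h'
  have hmul : (b : ℚ) * (θ - θ') = ((k - k' : ℤ) : ℚ) := by push_cast; linarith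
  obtain ⟨z, hz⟩ := exists_eq_intCast_of_coprime_den
    ((hco.mul_left hco').coprime_dvd_left (Rat.sub_den_dvd θ θ')) hmul
  have hkz : k - k' = b * z := by rw [hz] at hmul; exact_mod_cast hmul.symm
  have hk_eq : k - k' = 0 :=
    Int.eq_zero_of_abs_lt_dvd ⟨z, hkz⟩ (abs_sub_lt_of_nonneg_of_lt hk0 hkb hk0' hkb')
  have hz0 : z = 0 :=
    (mul_eq_zero.1 (hkz.symm.trans hk_eq)).resolve_left (hk0.trans_lt hkb).ne'
  rwa [hz0, Int.cast_zero, sub_eq_zero] at hz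

lemma dwork_eq (h : IsDworkValue b α θ) : dwork b α = θ := by
  have hex : ∃ θ, IsDworkValue b α θ := ⟨θ, h⟩
  exact (dif_pos hex).trans (unique hex.choose_spec h)

lemma add_floor_div_mem_Ioc (h : IsDworkValue b α θ) :
    θ + (⌊1 - α⌋ : ℚ) / b ∈ Set.Ioc 0 1 := by
  obtain ⟨-, k, hk0, hkb, hk⟩ := h
  have hb : (0 : ℚ) < b := by exact_mod_cast hk0.trans_lt hkb
  have hk0' : (0 : ℚ) ≤ k := by exact_mod_cast hk0
  have hkb' : (k : ℚ) + 1 ≤ b := by exact_mod_cast hkb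
  have hle : (⌊1 - α⌋ : ℚ) ≤ 1 - α := Int.floor_le _
  have hlt : 1 - α < ⌊1 - α⌋ + 1 := Int.lt_floor_add_one _
  have hsum : θ + (⌊1 - α⌋ : ℚ) / b = (b * θ + ⌊1 - α⌋) / b := by field_simp
  rw [hsum]
  exact ⟨div_pos (by linarith) hb, (div_le_one hb).2 (by linarith)⟩

end IsDworkValue

lemma exists_intCast_mul_eq_of_den_dvd {α : ℚ} {z : ℤ} (h : (α.den : ℤ) ∣ z) :
    ∃ m : ℤ, (z : ℚ) * α = m := by
  obtain ⟨q, rfl⟩ := h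
  refine ⟨q * α.num, ?_⟩
  push_cast
  linear_combination (q : ℚ) * Rat.mul_den_eq_num α

/-- The bounds hold because `θ` and `1 - θ`, if nonzero, are at least `1 / α.den`; the value `θ = 1`
only occurs for integral `α`, which is then positive. -/
lemma mem_Ico_of_mul_sub_eq {b : ℕ} {α θ : ℚ} {k t : ℤ} (hα : ¬ IsNonPosInt α)
    (hn : |⌊1 - α⌋| * α.den < b) (hθ : θ ∈ Set.Ioc 0 1) (ht : α.den * θ = t)
    (hk : b * θ - α = k) : k ∈ Set.Ico 0 (b : ℤ) := by
  have hD : (0 : ℚ) < α.den := by exact_mod_cast α.pos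
  have hb : (0 : ℚ) ≤ b := b.cast_nonneg
  have hfloor_le : (⌊1 - α⌋ : ℚ) ≤ 1 - α := Int.floor_le _
  have hlt_floor : 1 - α < ⌊1 - α⌋ + 1 := Int.lt_floor_add_one _
  obtain ⟨hlow, hupp⟩ : -(b : ℚ) < ⌊1 - α⌋ * α.den ∧ ⌊1 - α⌋ * (α.den : ℚ) < b := by
    have hnD : |⌊1 - α⌋ * (α.den : ℤ)| < b := by rwa [abs_mul, Nat.abs_cast]
    exact_mod_cast abs_lt.1 hnD
  constructor
  · have ht1 : (1 : ℚ) ≤ t := by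
      have : (0 : ℚ) < t := ht ▸ mul_pos hD hθ.1
      exact_mod_cast this
    have hk1 : (-1 : ℚ) < k := by nlinarith
    have : -1 < k := by exact_mod_cast hk1
    omega
  · by_contra! hbk
    have hbk' : (b : ℚ) ≤ k := by exact_mod_cast hbk
    rcases hθ.2.eq_or_lt with hθ1 | hθ1
    · exact hα ⟨b - k, by omega, by rw [hθ1] at hk; push_cast; linarith⟩
    · have ht1 : (t : ℚ) + 1 ≤ α.den := by
        have : (t : ℚ) < α.den := ht ▸ mul_lt_of_lt_one_right hD hθ1
        exact_mod_cast this
      nlinarith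

lemma isDworkValue_mul_sub {b : ℕ} {α : ℚ} {e m : ℤ} (hα : ¬ IsNonPosInt α)
    (he : (α.den : ℤ) ∣ b * e - 1) (hn : |⌊1 - α⌋| * α.den < b)
    (hθ : e * α - m ∈ Set.Ioc 0 1) : IsDworkValue b α (e * α - m) := by
  have hden : (e * α - m).den ∣ α.den := by
    rw [Rat.sub_intCast_den]
    simpa using Rat.mul_den_dvd e α
  have hco : IsCoprime (α.den : ℤ) b := by
    obtain ⟨u, hu⟩ := he
    exact ⟨-u, e, by linear_combination hu⟩
  obtain ⟨t, ht⟩ : ∃ t : ℤ, α.den * (e * α - m) = t := by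
    obtain ⟨t, ht⟩ := exists_intCast_mul_eq_of_den_dvd (Int.natCast_dvd_natCast.2 hden)
    exact ⟨t, by exact_mod_cast ht⟩
  obtain ⟨k, hk⟩ : ∃ k : ℤ, b * (e * α - m) - α = k := by
    obtain ⟨l, hl⟩ := exists_intCast_mul_eq_of_den_dvd he
    refine ⟨l - b * m, ?_⟩
    push_cast at hl ⊢
    linear_combination hl
  obtain ⟨hk0, hkb⟩ := mem_Ico_of_mul_sub_eq hα hn hθ ht hk
  exact ⟨(Nat.isCoprime_iff_coprime.1 hco).coprime_dvd_left hden, k, hk0, hkb, hk⟩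

lemma cangle_mem_Ioc (x : ℝ) : cangle x ∈ Set.Ioc 0 1 := by
  unfold cangle
  split_ifs with h
  · simp
  · have hfract : Int.fract x ≠ 0 := fun h0 =>
      h ((Int.fract_eq_zero_iff.1 h0).imp fun _ => Eq.symm)
    exact ⟨(Int.fract_nonneg x).lt_of_ne hfract.symm, (Int.fract_lt_one x).le⟩

lemma exists_cangle_eq_sub_intCast (x : ℝ) : ∃ m : ℤ, cangle x = x - m := by
  unfold cangle
  split_ifs with h
  · obtain ⟨m, rfl⟩ := h
    exact ⟨m - 1, by push_cast; ring⟩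
  · exact ⟨⌊x⌋, rfl⟩

lemma cangle_sub_intCast {y : ℝ} (hy : y ∈ Set.Ioc 0 1) (n : ℤ) : cangle (y - n) = y := by
  obtain ⟨m, hm⟩ := exists_cangle_eq_sub_intCast (y - n)
  obtain ⟨h0, h1⟩ := cangle_mem_Ioc (y - n)
  have hlow : (-1 : ℝ) < ((n + m : ℤ) : ℝ) := by push_cast; linarith [hy.1]
  have hupp : ((n + m : ℤ) : ℝ) < 1 := by push_cast; linarith [hy.2]
  have hnm : n + m = 0 := by
    have h2 : -1 < n + m := by exact_mod_cast hlow
    have h3 : n + m < 1 := by exact_mod_cast hupp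
    omega
  have hnm' : (n : ℝ) + m = 0 := by exact_mod_cast hnm
  linarith

/-- The sorting key of the Christol order: `x ⪯ y` means `christolKey x ≤ christolKey y` in the
lexicographic order. -/
noncomputable def christolKey (x : ℝ) : ℝ ×ₗ ℝ := toLex (cangle x, -x)

lemma cle_iff_christolKey_le {x y : ℝ} : cle x y ↔ christolKey x ≤ christolKey y := by
  simp only [cle, christolKey, Prod.Lex.toLex_le_toLex, neg_le_neg_iff]

lemma christolKey_sub_intCast_le_iff {y y' : ℝ} (hy : y ∈ Set.Ioc 0 1) (hy' : y' ∈ Set.Ioc 0 1)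
    (n n' : ℤ) :
    christolKey (y - n) ≤ christolKey (y' - n') ↔ y < y' ∨ y = y' ∧ n ≤ n' := by
  rw [christolKey, christolKey, Prod.Lex.toLex_le_toLex, cangle_sub_intCast hy,
    cangle_sub_intCast hy']
  refine or_congr_right (and_congr_right fun (h : y = y') => ?_)
  rw [h, neg_le_neg_iff, sub_le_sub_iff_left, Int.cast_le]

lemma card_filter_range_natCast_le {R : Type*} [Ring R] [LinearOrder R] [IsOrderedRing R]
    [FloorRing R] {c : ℕ} {z : R} (h0 : -1 ≤ z) (h1 : z < c) :
    (((Finset.range c).filter fun k : ℕ => (k : R) ≤ z).card : ℤ) = ⌊z⌋ + 1 := by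
  have hlow : -1 ≤ ⌊z⌋ := Int.le_floor.2 (by exact_mod_cast h0)
  have hupp : ⌊z⌋ < c := Int.floor_lt.2 (by exact_mod_cast h1)
  have hfilter : (Finset.range c).filter (fun k : ℕ => (k : R) ≤ z) =
      Finset.range (⌊z⌋ + 1).toNat := by
    ext k
    have hk : (k : R) ≤ z ↔ (k : ℤ) ≤ ⌊z⌋ := by rw [Int.le_floor, Int.cast_natCast]
    rw [Finset.mem_filter, Finset.mem_range, Finset.mem_range, hk]
    omega
  rw [hfilter, Finset.card_range]
  omega

lemma add_div_lt_add_div_of_mul_eq_intCast {K : Type*} [Field K] [LinearOrder K]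
    [IsStrictOrderedRing K] {d b x x' n n' : K} (hd : 0 < d) (hx : ∃ m : ℤ, d * x = m)
    (hx' : ∃ m : ℤ, d * x' = m) (hn : 2 * d * |n| < b) (hn' : 2 * d * |n'| < b) (h : x < x') :
    x + n / b < x' + n' / b := by
  obtain ⟨m, hm⟩ := hx
  obtain ⟨m', hm'⟩ := hx'
  have hb : 0 < b := (by positivity : 0 ≤ 2 * d * |n|).trans_lt hn
  have hgap : d * x + 1 ≤ d * x' := by
    have hlt : (m : K) < m' := by rw [← hm, ← hm']; exact mul_lt_mul_of_pos_left h hd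
    rw [hm, hm']
    exact_mod_cast hlt
  have hshift : d * (n - n') < b := by nlinarith [le_abs_self n, neg_abs_le n']
  have hdiv : d * (n / b - n' / b) < 1 := by rwa [← sub_div, mul_div_assoc', div_lt_one hb]
  have : n / b - n' / b < x' - x := lt_of_mul_lt_mul_left (by linarith) hd.le
  linarith

lemma floor_one_sub_mul_le_iff {R : Type*} [Ring R] [LinearOrder R] [IsStrictOrderedRing R]
    [FloorRing R] {a : ℤ} (ha : 0 < a) {α α' : R} (h : ∃ t : ℤ, α' = α + t) :
    ⌊1 - a * α⌋ ≤ ⌊1 - a * α'⌋ ↔ α' ≤ α := by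
  obtain ⟨t, rfl⟩ := h
  have hshift : 1 - a * (α + t) = 1 - a * α - ((a * t : ℤ) : R) := by
    rw [Int.cast_mul, mul_add, sub_sub]
  rw [hshift, Int.floor_sub_intCast, le_sub_self_iff, mul_nonpos_iff_pos_imp_nonpos,
    add_le_iff_nonpos_right, Int.cast_nonpos]
  exact ⟨fun h => h.1 ha, fun ht => ⟨fun _ => ht, fun _ => ha.le⟩⟩

section Pairs

variable {p : ℤ × ℤ} {b : ℕ}

lemma cOf_pos (hb : 0 < b) : 0 < cOf p b := Nat.gcd_pos_of_pos_right _ hb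

lemma cOf_dvd (p : ℤ × ℤ) (b : ℕ) : cOf p b ∣ b := Nat.gcd_dvd_right _ _

lemma cOf_dvd_fst (p : ℤ × ℤ) (b : ℕ) : (cOf p b : ℤ) ∣ p.1 :=
  (Int.natCast_dvd_natCast.2 (Nat.gcd_dvd_left _ _)).trans (Int.gcd_dvd_left _ _)

lemma cOf_dvd_snd (p : ℤ × ℤ) (b : ℕ) : (cOf p b : ℤ) ∣ p.2 :=
  (Int.natCast_dvd_natCast.2 (Nat.gcd_dvd_left _ _)).trans (Int.gcd_dvd_right _ _)

lemma cOf_mul_den_dvd_snd (hb : 0 < b) : (cOf p b : ℤ) * (ratOf p).den ∣ p.2 := by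
  obtain ⟨r', hr'⟩ := cOf_dvd_fst p b
  obtain ⟨s', hs'⟩ := cOf_dvd_snd p b
  have hc : (cOf p b : ℚ) ≠ 0 := by exact_mod_cast (cOf_pos hb).ne'
  have hrat : ratOf p = Rat.divInt r' s' := by
    rw [ratOf, hr', hs', Rat.divInt_eq_div]
    push_cast
    exact mul_div_mul_left _ _ hc
  rw [hrat]
  exact (mul_dvd_mul_left _ (Rat.den_dvd r' s')).trans hs'.symm.dvd

lemma natCast_eq_cOf_mul_div (p : ℤ × ℤ) (b : ℕ) : (b : ℤ) = cOf p b * (b / cOf p b : ℕ) := by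
  exact_mod_cast (Nat.mul_div_cancel' (cOf_dvd p b)).symm

lemma den_dvd_div_cOf_mul_sub_one {e : ℤ} (hb : 0 < b) (he : p.2 ∣ b * e - cOf p b) :
    ((ratOf p).den : ℤ) ∣ (b / cOf p b : ℕ) * e - 1 := by
  have hc : (cOf p b : ℤ) ≠ 0 := by exact_mod_cast (cOf_pos hb).ne'
  refine Int.dvd_of_mul_dvd_mul_left hc ((cOf_mul_den_dvd_snd hb).trans ?_)
  have hmul : (cOf p b : ℤ) * ((b / cOf p b : ℕ) * e - 1) = b * e - cOf p b := by
    linear_combination -e * natCast_eq_cOf_mul_div p b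
  rwa [hmul]

lemma gcd_div_cOf_eq_one_iff (hb : 0 < b) :
    Int.gcd (p.2 / (cOf p b : ℤ)) ((b / cOf p b : ℕ) : ℤ) = 1 ↔ inV p b := by
  rw [Int.natCast_div, Int.gcd_div (cOf_dvd_snd p b) (Int.natCast_dvd_natCast.2 (cOf_dvd p b)),
    Int.natAbs_natCast, inV, Nat.div_eq_iff_eq_mul_left (cOf_pos hb), one_mul]
  · rfl
  · exact Nat.dvd_gcd (Int.natCast_dvd.1 (cOf_dvd_snd p b)) (cOf_dvd p b)

lemma qdelta_eq_ite (hb : 0 < b) (x : ℝ) :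
    qdelta b p.1 p.2 x = if inV p b then
      ⌊(cOf p b : ℝ) * x - (dwork (b / cOf p b) (ratOf p) : ℝ)
        - (⌊1 - ratOf p⌋ : ℝ) / (b / cOf p b : ℕ)⌋ + 1
    else 0 :=
  if_congr (gcd_div_cOf_eq_one_iff hb) rfl rfl

/-- The point `(⟨e·α⟩ + k)/c`, for `α` the ratio of `p`; it is the representative in `(0, 1]` of the
jump abscissa `jumpPt p b a e k`. -/
noncomputable def jumpBase (p : ℤ × ℤ) (b : ℕ) (e : ℤ) (k : ℕ) : ℝ :=
  (cangle ((e * ratOf p : ℚ) : ℝ) + k) / cOf p b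

/-- For large `b`, the `k`-th jump abscissa in `(0, 1]` of the step function `δ_b` attached to the
pair `p`, where `k < c`. -/
noncomputable def deltaJump (p : ℤ × ℤ) (b : ℕ) (e : ℤ) (k : ℕ) : ℝ :=
  jumpBase p b e k + (⌊1 - ratOf p⌋ : ℝ) / b

/-- The indices `k` of the jumps contributed by the pair `p` to `δ_b` and to `Ξ(b, ·)`. -/
noncomputable def jumpIndices (p : ℤ × ℤ) (b : ℕ) : Finset ℕ :=
  if inV p b then Finset.range (cOf p b) else ∅

lemma mem_jumpIndices {k : ℕ} : k ∈ jumpIndices p b ↔ inV p b ∧ k < cOf p b := by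
  unfold jumpIndices
  split_ifs with h <;> simp [h]

lemma jumpIndices_of_inV (hV : inV p b) : jumpIndices p b = Finset.range (cOf p b) := if_pos hV

lemma jumpPt_eq_jumpBase_sub (p : ℤ × ℤ) (b : ℕ) (a e : ℤ) (k : ℕ) :
    jumpPt p b a e k = jumpBase p b e k - (⌊1 - (a : ℚ) * ratOf p⌋ : ℝ) := rfl

lemma XiCount_eq_card (p : ℤ × ℤ) (b : ℕ) (a e : ℤ) (x : ℝ) :
    XiCount p b a e x = ((jumpIndices p b).filter fun k =>
      christolKey (jumpPt p b a e k) ≤ christolKey x).card := by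
  unfold XiCount jumpIndices
  split_ifs
  · exact congrArg _ (Finset.filter_congr fun _ _ => cle_iff_christolKey_le)
  · rfl

lemma jumpBase_mem_Ioc {e : ℤ} {k : ℕ} (hk : k < cOf p b) : jumpBase p b e k ∈ Set.Ioc 0 1 := by
  obtain ⟨h0, h1⟩ := cangle_mem_Ioc ((e * ratOf p : ℚ) : ℝ)
  have hk' : (k : ℝ) + 1 ≤ cOf p b := by exact_mod_cast hk
  have hc : (0 : ℝ) < cOf p b := by linarith [k.cast_nonneg (α := ℝ)]
  exact ⟨div_pos (by positivity) hc, (div_le_one hc).2 (by linarith)⟩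

lemma exists_cOf_mul_jumpBase_eq (p : ℤ × ℤ) {b : ℕ} (hb : 0 < b) (e : ℤ) (k : ℕ) :
    ∃ m : ℤ, (cOf p b : ℝ) * jumpBase p b e k = e * ratOf p - m := by
  obtain ⟨m, hm⟩ := exists_cangle_eq_sub_intCast ((e * ratOf p : ℚ) : ℝ)
  have hc : (cOf p b : ℝ) ≠ 0 := by exact_mod_cast (cOf_pos hb).ne'
  refine ⟨m - k, ?_⟩
  rw [jumpBase, mul_div_cancel₀ _ hc, hm]
  push_cast
  ring

lemma exists_mul_jumpBase_eq_intCast {d : ℕ} (hb : 0 < b) (hd : p.2 ∣ d) (e : ℤ) (k : ℕ) :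
    ∃ m : ℤ, (d : ℝ) * jumpBase p b e k = m := by
  obtain ⟨m, hm⟩ := exists_cOf_mul_jumpBase_eq p hb e k
  obtain ⟨q, hq⟩ := (cOf_mul_den_dvd_snd hb).trans hd
  have hq' : (d : ℝ) = cOf p b * (ratOf p).den * q := by exact_mod_cast hq
  have hnum : ((ratOf p : ℚ) : ℝ) * (ratOf p).den = (ratOf p).num := by
    exact_mod_cast Rat.mul_den_eq_num (ratOf p)
  refine ⟨q * (e * (ratOf p).num - m * (ratOf p).den), ?_⟩
  push_cast
  linear_combination jumpBase p b e k * hq' + q * (ratOf p).den * hm + q * e * hnum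

lemma exists_mul_jumpBase_sub_eq_intCast {e : ℤ} (hb : 0 < b) (he : p.2 ∣ b * e - cOf p b)
    (k : ℕ) : ∃ m : ℤ, (b : ℝ) * jumpBase p b e k - ratOf p = m := by
  obtain ⟨m, hm⟩ := exists_cOf_mul_jumpBase_eq p hb e k
  obtain ⟨l, hl⟩ := exists_intCast_mul_eq_of_den_dvd (den_dvd_div_cOf_mul_sub_one hb he)
  have hb' : (b : ℝ) = cOf p b * (b / cOf p b : ℕ) := by
    exact_mod_cast natCast_eq_cOf_mul_div p b
  generalize b / cOf p b = b' at hl hb'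
  have hl' : ((b' : ℝ) * e - 1) * ratOf p = l := by exact_mod_cast hl
  refine ⟨l - b' * m, ?_⟩
  push_cast
  linear_combination jumpBase p b e k * hb' + (b' : ℝ) * hm + hl'

lemma deltaJump_eq_add_div (p : ℤ × ℤ) (b : ℕ) (e : ℤ) (k : ℕ) :
    deltaJump p b e k = deltaJump p b e 0 + k / cOf p b := by
  unfold deltaJump jumpBase
  push_cast
  ring

end Pairs

/-- The regime in which the jumps of `δ_b` on `(0, 1]` are exactly the points `deltaJump p b e k`
and are ordered like the points `jumpPt p b a e k`. The modulus `b` is large with respect to `d`, a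
multiple of the second component of `p`; in the application `d` is the common multiple `dRT`. -/
structure LargeModulus (p : ℤ × ℤ) (d b : ℕ) (e : ℤ) : Prop where
  snd_dvd : p.2 ∣ d
  period_pos : 0 < d
  not_isNonPosInt : ¬ IsNonPosInt (ratOf p)
  floor_lt : 2 * d * |⌊1 - ratOf p⌋| < b
  admissible : goodChoice p b e

namespace LargeModulus

variable {p p' : ℤ × ℤ} {d b : ℕ} {e e' : ℤ}

lemma pos (h : LargeModulus p d b e) : 0 < b := by
  exact_mod_cast (by positivity : (0 : ℤ) ≤ _).trans_lt h.floor_lt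

lemma abs_floor_mul_den_lt (h : LargeModulus p d b e) :
    |⌊1 - ratOf p⌋| * (ratOf p).den < (b / cOf p b : ℕ) := by
  have hc : (0 : ℤ) < cOf p b := by exact_mod_cast cOf_pos h.pos
  have hd : (0 : ℤ) < d := by exact_mod_cast h.period_pos
  have hle : (cOf p b : ℤ) * (ratOf p).den ≤ d :=
    Int.le_of_dvd hd ((cOf_mul_den_dvd_snd h.pos).trans h.snd_dvd)
  have hn : (0 : ℤ) ≤ d * |⌊1 - ratOf p⌋| := by positivity
  refine lt_of_mul_lt_mul_left ?_ hc.le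
  calc (cOf p b : ℤ) * (|⌊1 - ratOf p⌋| * (ratOf p).den)
      = cOf p b * (ratOf p).den * |⌊1 - ratOf p⌋| := by ring
    _ ≤ d * |⌊1 - ratOf p⌋| := mul_le_mul_of_nonneg_right hle (abs_nonneg _)
    _ < b := by linarith [h.floor_lt]
    _ = cOf p b * (b / cOf p b : ℕ) := natCast_eq_cOf_mul_div p b

lemma exists_isDworkValue_eq_cangle (h : LargeModulus p d b e) (hV : inV p b) :
    ∃ θ : ℚ, IsDworkValue (b / cOf p b) (ratOf p) θ ∧
      (θ : ℝ) = cangle ((e * ratOf p : ℚ) : ℝ) := by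
  obtain ⟨m, hm⟩ := exists_cangle_eq_sub_intCast ((e * ratOf p : ℚ) : ℝ)
  have hmem := cangle_mem_Ioc ((e * ratOf p : ℚ) : ℝ)
  rw [hm] at hmem ⊢
  refine ⟨e * ratOf p - m, ?_, by push_cast; rfl⟩
  refine isDworkValue_mul_sub h.not_isNonPosInt
    (den_dvd_div_cOf_mul_sub_one h.pos (h.admissible hV).2) h.abs_floor_mul_den_lt ?_
  exact ⟨by exact_mod_cast hmem.1, by exact_mod_cast hmem.2⟩

lemma dwork_add_floor_div_eq (h : LargeModulus p d b e) (hV : inV p b) :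
    (dwork (b / cOf p b) (ratOf p) : ℝ) + (⌊1 - ratOf p⌋ : ℝ) / (b / cOf p b : ℕ) =
      cOf p b * deltaJump p b e 0 := by
  obtain ⟨θ, hθ, hθ_eq⟩ := h.exists_isDworkValue_eq_cangle hV
  have hc : (cOf p b : ℝ) ≠ 0 := by exact_mod_cast (cOf_pos h.pos).ne'
  have hb : (b : ℝ) = cOf p b * (b / cOf p b : ℕ) := by
    exact_mod_cast natCast_eq_cOf_mul_div p b
  rw [hθ.dwork_eq, hθ_eq, deltaJump, jumpBase, Nat.cast_zero, add_zero, mul_add,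
    mul_div_cancel₀ _ hc, add_right_inj, hb, mul_div_assoc', mul_div_mul_left _ _ hc]

lemma cOf_mul_deltaJump_mem_Ioc (h : LargeModulus p d b e) (hV : inV p b) :
    cOf p b * deltaJump p b e 0 ∈ Set.Ioc 0 1 := by
  obtain ⟨θ, hθ, -⟩ := h.exists_isDworkValue_eq_cangle hV
  have hmem := hθ.add_floor_div_mem_Ioc
  rw [← h.dwork_add_floor_div_eq hV, hθ.dwork_eq]
  generalize b / cOf p b = b', ⌊1 - ratOf p⌋ = n at hmem ⊢
  obtain ⟨h0, h1⟩ := hmem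
  exact ⟨by exact_mod_cast h0, by exact_mod_cast h1⟩

lemma qdelta_of_inV (h : LargeModulus p d b e) (hV : inV p b) (x : ℝ) :
    qdelta b p.1 p.2 x = ⌊cOf p b * (x - deltaJump p b e 0)⌋ + 1 := by
  rw [qdelta_eq_ite h.pos, if_pos hV, sub_sub, h.dwork_add_floor_div_eq hV, mul_sub]

lemma deltaJump_mem_Ioc (h : LargeModulus p d b e) {k : ℕ} (hk : k ∈ jumpIndices p b) :
    deltaJump p b e k ∈ Set.Ioc 0 1 := by
  obtain ⟨hV, hk⟩ := mem_jumpIndices.1 hk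
  obtain ⟨h0, h1⟩ := h.cOf_mul_deltaJump_mem_Ioc hV
  have hk' : (k : ℝ) + 1 ≤ cOf p b := by exact_mod_cast hk
  have hc : (0 : ℝ) < cOf p b := by linarith [k.cast_nonneg (α := ℝ)]
  have heq : deltaJump p b e k = (cOf p b * deltaJump p b e 0 + k) / cOf p b := by
    rw [deltaJump_eq_add_div]
    field_simp
  rw [heq]
  exact ⟨by positivity, (div_le_one hc).2 (by linarith)⟩

lemma qdelta_eq_card (h : LargeModulus p d b e) {x : ℝ} (hx : x ∈ Set.Icc 0 1) :
    qdelta b p.1 p.2 x = ((jumpIndices p b).filter fun k => deltaJump p b e k ≤ x).card := by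
  by_cases hV : inV p b
  · obtain ⟨h0, h1⟩ := h.cOf_mul_deltaJump_mem_Ioc hV
    have hc : (0 : ℝ) < cOf p b := by exact_mod_cast cOf_pos h.pos
    have hjump : ∀ k : ℕ, deltaJump p b e k ≤ x ↔ (k : ℝ) ≤ cOf p b * (x - deltaJump p b e 0) :=
      fun k => by rw [deltaJump_eq_add_div, ← le_sub_iff_add_le', div_le_iff₀' hc]
    simp only [hjump, jumpIndices_of_inV hV]
    rw [h.qdelta_of_inV hV, card_filter_range_natCast_le] <;> nlinarith [hx.1, hx.2]
  · simp [qdelta_eq_ite h.pos, jumpIndices, hV]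

lemma qdelta_add_one (h : LargeModulus p d b e) (x : ℝ) :
    qdelta b p.1 p.2 (x + 1) = qdelta b p.1 p.2 x + qdelta b p.1 p.2 1 := by
  by_cases hV : inV p b
  · obtain ⟨h0, h1⟩ := h.cOf_mul_deltaJump_mem_Ioc hV
    have hone : ⌊-(cOf p b * deltaJump p b e 0)⌋ = -1 := by
      rw [Int.floor_eq_iff]
      constructor <;> push_cast <;> linarith
    simp only [h.qdelta_of_inV hV]
    rw [show (cOf p b : ℝ) * (x + 1 - deltaJump p b e 0) =
        cOf p b * (x - deltaJump p b e 0) + cOf p b by ring,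
      show (cOf p b : ℝ) * (1 - deltaJump p b e 0) =
        -(cOf p b * deltaJump p b e 0) + cOf p b by ring,
      Int.floor_add_natCast, Int.floor_add_natCast, hone]
    ring
  · simp [qdelta_eq_ite h.pos, hV]

lemma deltaJump_le_iff_christolKey_le {a : ℤ} {k k' : ℕ} (ha : 0 < a) (h : LargeModulus p d b e)
    (h' : LargeModulus p' d b e') (hk : k ∈ jumpIndices p b) (hk' : k' ∈ jumpIndices p' b) :
    deltaJump p b e k ≤ deltaJump p' b e' k' ↔
      christolKey (jumpPt p b a e k) ≤ christolKey (jumpPt p' b a e' k') := by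
  obtain ⟨hV, hk⟩ := mem_jumpIndices.1 hk
  obtain ⟨hV', hk'⟩ := mem_jumpIndices.1 hk'
  have hd : (0 : ℝ) < d := by exact_mod_cast h.period_pos
  have hb : (0 : ℝ) < b := by exact_mod_cast h.pos
  have hn : 2 * d * |(⌊1 - ratOf p⌋ : ℝ)| < b := by exact_mod_cast h.floor_lt
  have hn' : 2 * d * |(⌊1 - ratOf p'⌋ : ℝ)| < b := by exact_mod_cast h'.floor_lt
  have hint := exists_mul_jumpBase_eq_intCast h.pos h.snd_dvd e k
  have hint' := exists_mul_jumpBase_eq_intCast h.pos h'.snd_dvd e' k'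
  obtain ⟨m, hm⟩ := exists_mul_jumpBase_sub_eq_intCast h.pos (h.admissible hV).2 k
  obtain ⟨m', hm'⟩ := exists_mul_jumpBase_sub_eq_intCast h.pos (h'.admissible hV').2 k'
  rw [jumpPt_eq_jumpBase_sub, jumpPt_eq_jumpBase_sub,
    christolKey_sub_intCast_le_iff (jumpBase_mem_Ioc hk) (jumpBase_mem_Ioc hk'), deltaJump,
    deltaJump]
  rcases lt_trichotomy (jumpBase p b e k) (jumpBase p' b e' k') with hlt | heq | hgt
  · exact iff_of_true
      (add_div_lt_add_div_of_mul_eq_intCast hd hint hint' hn hn' hlt).le (Or.inl hlt)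
  · have hα : ∃ t : ℤ, ratOf p' = ratOf p + t := by
      refine ⟨m - m', ?_⟩
      have : (ratOf p' : ℝ) = ratOf p + (m - m' : ℤ) := by
        rw [heq] at hm
        push_cast
        linarith
      exact_mod_cast this
    have htie := floor_one_sub_mul_le_iff one_pos hα
    rw [Int.cast_one, one_mul, one_mul] at htie
    rw [heq, add_le_add_iff_left, div_le_div_iff_of_pos_right hb, Int.cast_le, htie,
      floor_one_sub_mul_le_iff ha hα]
    simp only [lt_irrefl, true_and, false_or]
  · refine iff_of_false
      (add_div_lt_add_div_of_mul_eq_intCast hd hint' hint hn' hn hgt).not_ge ?_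
    rintro (hlt | ⟨heq, -⟩)
    exacts [hgt.asymm hlt, hgt.ne' heq]

end LargeModulus

lemma forall_sum_filter_le_nonneg_iff {τ α M : Type*} [LinearOrder α] [AddCommMonoid M]
    [Preorder M] {T : Finset τ} {f : τ → α} {S : Set α} (hS : ∀ t ∈ T, f t ∈ S) (σ : τ → M) :
    (∀ x ∈ S, 0 ≤ ∑ t ∈ T with f t ≤ x, σ t) ↔ ∀ t₀ ∈ T, 0 ≤ ∑ t ∈ T with f t ≤ f t₀, σ t := by
  refine ⟨fun h t₀ ht₀ => h _ (hS t₀ ht₀), fun h x _ => ?_⟩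
  obtain hempty | hne := (T.filter fun t => f t ≤ x).eq_empty_or_nonempty
  · rw [hempty, Finset.sum_empty]
  · obtain ⟨t₀, ht₀, hmax⟩ := Finset.exists_max_image _ f hne
    rw [Finset.mem_filter] at ht₀
    have hsegment : ∀ t ∈ T, f t ≤ x ↔ f t ≤ f t₀ := fun t ht =>
      ⟨fun hx => hmax t (Finset.mem_filter.2 ⟨ht, hx⟩), fun hle => hle.trans ht₀.2⟩
    rw [Finset.filter_congr hsegment]
    exact h t₀ ht₀.1

lemma sum_mul_card_filter {ι κ R : Type*} [Fintype ι] [CommSemiring R] (s : ι → Finset κ)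
    (σ : ι → R) (q : (Σ _ : ι, κ) → Prop) [DecidablePred q] :
    ∑ i, σ i * ((s i).filter fun k => q ⟨i, k⟩).card =
      ∑ t ∈ Finset.univ.sigma s with q t, σ t.1 := by
  simp only [Finset.sum_filter, Finset.sum_sigma, Finset.card_filter, Nat.cast_sum,
    Finset.mul_sum, Nat.cast_ite, Nat.cast_one, Nat.cast_zero, mul_ite, mul_one, mul_zero]

lemma forall_nonneg_iff_forall_mem_Icc {R M : Type*} [Ring R] [LinearOrder R]
    [IsStrictOrderedRing R] [FloorRing R] [AddCommMonoid M] [PartialOrder M] [IsOrderedAddMonoid M]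
    {F : R → M} (hF : ∀ x, F (x + 1) = F x + F 1) :
    (∀ x, 0 ≤ x → 0 ≤ F x) ↔ ∀ x ∈ Set.Icc 0 1, 0 ≤ F x := by
  refine ⟨fun h x hx => h x hx.1, fun h x hx => ?_⟩
  have hstep : ∀ (n : ℕ) (y : R), F (y + n) = F y + n • F 1 := fun n y => by
    induction n with
    | zero => rw [Nat.cast_zero, add_zero, zero_nsmul, add_zero]
    | succ n ih => rw [Nat.cast_succ, ← add_assoc, hF, ih, succ_nsmul, add_assoc]
  have hx_eq : x = Int.fract x + (⌊x⌋₊ : R) := by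
    rw [natCast_floor_eq_intCast_floor hx, Int.fract_add_floor]
  rw [hx_eq, hstep]
  exact add_nonneg (h _ ⟨Int.fract_nonneg x, (Int.fract_lt_one x).le⟩)
    (nsmul_nonneg (h 1 (Set.right_mem_Icc.2 zero_le_one)) _)

section Sums

variable {ι : Type*} [Fintype ι] {P : ι → ℤ × ℤ} {d b : ℕ} {E : ι → ℤ}

lemma sum_mul_qdelta_nonneg_iff_jumps (hP : ∀ i, LargeModulus (P i) d b (E i)) (σ : ι → ℤ) :
    (∀ x : ℝ, 0 ≤ x → 0 ≤ ∑ i, σ i * qdelta b (P i).1 (P i).2 x) ↔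
      ∀ t₀ ∈ Finset.univ.sigma fun i => jumpIndices (P i) b,
        0 ≤ ∑ t ∈ Finset.univ.sigma (fun i => jumpIndices (P i) b) with
          deltaJump (P t.1) b (E t.1) t.2 ≤ deltaJump (P t₀.1) b (E t₀.1) t₀.2, σ t.1 := by
  have hperiod : ∀ x : ℝ, ∑ i, σ i * qdelta b (P i).1 (P i).2 (x + 1) =
      ∑ i, σ i * qdelta b (P i).1 (P i).2 x + ∑ i, σ i * qdelta b (P i).1 (P i).2 1 := fun x => by
    simp only [(hP _).qdelta_add_one, mul_add, Finset.sum_add_distrib]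
  have hunit : ∀ t ∈ Finset.univ.sigma fun i => jumpIndices (P i) b,
      deltaJump (P t.1) b (E t.1) t.2 ∈ Set.Icc (0 : ℝ) 1 := fun t ht =>
    Set.Ioc_subset_Icc_self ((hP t.1).deltaJump_mem_Ioc (Finset.mem_sigma.1 ht).2)
  rw [forall_nonneg_iff_forall_mem_Icc hperiod,
    ← forall_sum_filter_le_nonneg_iff hunit fun t => σ t.1]
  refine forall₂_congr fun x hx => ?_
  simp only [(hP _).qdelta_eq_card hx]
  rw [sum_mul_card_filter _ σ fun t => deltaJump (P t.1) b (E t.1) t.2 ≤ x]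

lemma sum_mul_XiCount_nonneg_iff_jumps (P : ι → ℤ × ℤ) (b : ℕ) (E : ι → ℤ) (a : ℤ) (σ : ι → ℤ) :
    (∀ x : ℝ, 0 ≤ ∑ i, σ i * (XiCount (P i) b a (E i) x : ℤ)) ↔
      ∀ t₀ ∈ Finset.univ.sigma fun i => jumpIndices (P i) b,
        0 ≤ ∑ t ∈ Finset.univ.sigma (fun i => jumpIndices (P i) b) with
          christolKey (jumpPt (P t.1) b a (E t.1) t.2) ≤
            christolKey (jumpPt (P t₀.1) b a (E t₀.1) t₀.2), σ t.1 := by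
  have hmem : ∀ t ∈ Finset.univ.sigma fun i => jumpIndices (P i) b,
      christolKey (jumpPt (P t.1) b a (E t.1) t.2) ∈ Set.range christolKey :=
    fun _ _ => Set.mem_range_self _
  simp only [XiCount_eq_card]
  rw [← forall_sum_filter_le_nonneg_iff hmem fun t => σ t.1, Set.forall_mem_range]
  refine forall_congr' fun x => ?_
  rw [sum_mul_card_filter _ σ fun t =>
    christolKey (jumpPt (P t.1) b a (E t.1) t.2) ≤ christolKey x]

lemma sum_mul_qdelta_nonneg_iff_sum_mul_XiCount_nonneg {a : ℤ} (ha : 0 < a)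
    (hP : ∀ i, LargeModulus (P i) d b (E i)) (σ : ι → ℤ) :
    (∀ x : ℝ, 0 ≤ x → 0 ≤ ∑ i, σ i * qdelta b (P i).1 (P i).2 x) ↔
      ∀ x : ℝ, 0 ≤ ∑ i, σ i * (XiCount (P i) b a (E i) x : ℤ) := by
  rw [sum_mul_qdelta_nonneg_iff_jumps hP, sum_mul_XiCount_nonneg_iff_jumps]
  refine forall₂_congr fun t₀ ht₀ => ?_
  rw [Finset.filter_congr fun t ht => (hP t.1).deltaJump_le_iff_christolKey_le ha (hP t₀.1)
    (Finset.mem_sigma.1 ht).2 (Finset.mem_sigma.1 ht₀).2]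

end Sums

section Congruence

variable {p : ℤ × ℤ} {b b' d : ℕ}

lemma cOf_congr (hd : p.2 ∣ d) (h : b ≡ b' [MOD d]) : cOf p b = cOf p b' := by
  have hg : Int.gcd p.1 p.2 ∣ d := Int.natCast_dvd_natCast.1 ((Int.gcd_dvd_right _ _).trans hd)
  rw [cOf, cOf, Nat.gcd_comm, (h.of_dvd hg).gcd_eq, Nat.gcd_comm]

lemma inV_congr (hd : p.2 ∣ d) (h : b ≡ b' [MOD d]) : inV p b ↔ inV p b' := by
  rw [inV, inV, cOf_congr hd h, Nat.gcd_comm, (h.of_dvd (Int.natAbs_dvd_natAbs.2 hd)).gcd_eq,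
    Nat.gcd_comm]

lemma goodChoice_congr (hd : p.2 ∣ d) (h : b ≡ b' [MOD d]) (e : ℤ) :
    goodChoice p b e ↔ goodChoice p b' e := by
  have hdvd : p.2 ∣ (b' * e - cOf p b) - (b * e - cOf p b) := by
    rw [sub_sub_sub_cancel_right, ← sub_mul]
    exact (hd.trans h.dvd).mul_right e
  rw [goodChoice, goodChoice, inV_congr hd h, ← cOf_congr hd h, dvd_iff_dvd_of_dvd_sub hdvd]

lemma XiCount_congr (hd : p.2 ∣ d) (h : b ≡ b' [MOD d]) (a e : ℤ) (x : ℝ) :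
    XiCount p b a e x = XiCount p b' a e x := by
  unfold XiCount jumpPt
  simp only [cOf_congr hd h]
  exact if_congr (inV_congr hd h) rfl rfl

end Congruence

lemma exists_goodChoice {p : ℤ × ℤ} (hs : p.2 ≠ 0) (b : ℕ) : ∃ e, goodChoice p b e := by
  by_cases hV : inV p b
  · have hgcd : (cOf p b : ℤ) = p.2 * p.2.gcdA b + b * p.2.gcdB b := by
      rw [← Int.gcd_eq_gcd_ab]
      exact_mod_cast hV.symm
    refine ⟨p.2.gcdB b % p.2 + |p.2|, fun _ => ⟨?_, ?_⟩⟩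
    · exact add_pos_of_nonneg_of_pos (Int.emod_nonneg _ hs) (abs_pos.2 hs)
    · obtain ⟨u, hu⟩ : p.2 ∣ |p.2| := (dvd_abs _ _).2 dvd_rfl
      refine ⟨b * u - b * (p.2.gcdB b / p.2) - p.2.gcdA b, ?_⟩
      rw [hgcd]
      linear_combination (b : ℤ) * hu + (b : ℤ) * Int.emod_add_mul_ediv (p.2.gcdB b) p.2
  · exact ⟨0, fun h => absurd h hV⟩

lemma aOf_pos (d b : ℕ) : 0 < aOf d b := by
  unfold aOf
  split_ifs with h
  · exact h.choose_spec.1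
  · exact one_pos

lemma repMod_mem_Icc {d : ℕ} (hd : 0 < d) (b : ℕ) : repMod d b ∈ Set.Icc 1 d := by
  unfold repMod
  split_ifs with h
  · exact ⟨hd, le_rfl⟩
  · exact ⟨Nat.pos_of_ne_zero h, (Nat.mod_lt _ hd).le⟩

lemma repMod_modEq (d b : ℕ) : repMod d b ≡ b [MOD d] := by
  unfold repMod
  split_ifs with h
  · rw [Nat.ModEq, Nat.mod_self, h]
  · exact Nat.mod_modEq _ _

section PairVectors

variable {v w : ℕ} {rr : Fin v → ℤ × ℤ} {tt : Fin w → ℤ × ℤ}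

lemma dRT_pos (hs : ∀ i, (rr i).2 ≠ 0) (hu : ∀ j, (tt j).2 ≠ 0) : 0 < dRT rr tt := by
  refine Nat.lcm_pos (Nat.pos_of_ne_zero ?_) (Nat.pos_of_ne_zero ?_)
  · simp [Finset.lcm_eq_zero_iff, hs]
  · simp [Finset.lcm_eq_zero_iff, hu]

lemma snd_dvd_dRT (rr : Fin v → ℤ × ℤ) (tt : Fin w → ℤ × ℤ) (i : Fin v ⊕ Fin w) :
    (Sum.elim rr tt i).2 ∣ dRT rr tt := by
  rw [Int.dvd_natCast]
  cases i with
  | inl i =>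
    exact (Finset.dvd_lcm (f := fun i => (rr i).2.natAbs) (Finset.mem_univ i)).trans
      (Nat.dvd_lcm_left _ _)
  | inr j =>
    exact (Finset.dvd_lcm (f := fun j => (tt j).2.natAbs) (Finset.mem_univ j)).trans
      (Nat.dvd_lcm_right _ _)

lemma qDeltaFn_eq_sum (b : ℕ) (rr : Fin v → ℤ × ℤ) (tt : Fin w → ℤ × ℤ) (x : ℝ) :
    qDeltaFn b rr tt x = ∑ i : Fin v ⊕ Fin w, Sum.elim (fun _ => 1) (fun _ => -1) i *
      qdelta b (Sum.elim rr tt i).1 (Sum.elim rr tt i).2 x := by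
  simp [qDeltaFn, Fintype.sum_sum_type, sub_eq_add_neg]

lemma Xi_eq_sum (rr : Fin v → ℤ × ℤ) (tt : Fin w → ℤ × ℤ) (b : ℕ) (e : Fin v → ℤ)
    (f : Fin w → ℤ) (x : ℝ) :
    Xi rr tt b e f x = ∑ i : Fin v ⊕ Fin w, Sum.elim (fun _ => 1) (fun _ => -1) i *
      (XiCount (Sum.elim rr tt i) b (aOf (dRT rr tt) b : ℕ) (Sum.elim e f i) x : ℤ) := by
  simp [Xi, Fintype.sum_sum_type, sub_eq_add_neg]

lemma eventually_qDeltaFn_nonneg_iff_Xi_nonneg (hs : ∀ i, (rr i).2 ≠ 0) (hu : ∀ j, (tt j).2 ≠ 0)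
    (hr : ∀ i, ¬ IsNonPosInt (ratOf (rr i))) (ht : ∀ j, ¬ IsNonPosInt (ratOf (tt j))) :
    ∀ᶠ b : ℕ in Filter.atTop, ∀ b₀, b₀ ≡ b [MOD dRT rr tt] → ∀ e f,
      (∀ i, goodChoice (rr i) b₀ (e i)) → (∀ j, goodChoice (tt j) b₀ (f j)) →
        ((∀ x : ℝ, 0 ≤ x → 0 ≤ qDeltaFn b rr tt x) ↔ ∀ x : ℝ, 0 ≤ Xi rr tt b₀ e f x) := by
  have hlarge : ∀ᶠ b : ℕ in Filter.atTop, ∀ i,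
      2 * dRT rr tt * |⌊1 - ratOf (Sum.elim rr tt i)⌋| < (b : ℤ) :=
    Filter.eventually_all.2 fun i =>
      tendsto_natCast_atTop_atTop.eventually (Filter.eventually_gt_atTop _)
  have hrt : ∀ i, ¬ IsNonPosInt (ratOf (Sum.elim rr tt i)) := Sum.rec hr ht
  filter_upwards [hlarge] with b hb b₀ hmod e f he hf
  have hef : ∀ i, goodChoice (Sum.elim rr tt i) b₀ (Sum.elim e f i) := Sum.rec he hf
  have hP : ∀ i, LargeModulus (Sum.elim rr tt i) (dRT rr tt) b (Sum.elim e f i) := fun i =>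
    { snd_dvd := snd_dvd_dRT rr tt i
      period_pos := dRT_pos hs hu
      not_isNonPosInt := hrt i
      floor_lt := hb i
      admissible := (goodChoice_congr (snd_dvd_dRT rr tt i) hmod _).1 (hef i) }
  simp only [qDeltaFn_eq_sum, Xi_eq_sum, fun i => XiCount_congr (snd_dvd_dRT rr tt i) hmod]
  exact sum_mul_qdelta_nonneg_iff_sum_mul_XiCount_nonneg
    (by exact_mod_cast aOf_pos (dRT rr tt) b₀) hP _

end PairVectors

/-- Lemma 5.5: the eventual non-negativity of the Landau functions
`Δ_b^{𝐫,𝐭}` is equivalent to the non-negativity of the finitely many Christol functions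
`Ξ_{𝐫,𝐭}(b, ·)`, `b ∈ {1,…,d_{𝐫,𝐭}}`. -/
theorem delta_nonneg_iff_xi_nonneg {v w : ℕ} (rr : Fin v → ℤ × ℤ) (tt : Fin w → ℤ × ℤ)
    (hs : ∀ i, (rr i).2 ≠ 0) (hu : ∀ j, (tt j).2 ≠ 0)
    (hr : ∀ i, ¬ IsNonPosInt (ratOf (rr i))) (ht : ∀ j, ¬ IsNonPosInt (ratOf (tt j))) :
    (∃ N : ℕ, ∀ b : ℕ, N ≤ b → ∀ x : ℝ, 0 ≤ x → 0 ≤ qDeltaFn b rr tt x) ↔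
      (∀ b : ℕ, 1 ≤ b → b ≤ dRT rr tt →
        ∀ (e : Fin v → ℤ) (f : Fin w → ℤ),
          (∀ i, goodChoice (rr i) b (e i)) → (∀ j, goodChoice (tt j) b (f j)) →
            ∀ x : ℝ, 0 ≤ Xi rr tt b e f x) := by
  have hd := dRT_pos hs hu
  have hiff := eventually_qDeltaFn_nonneg_iff_Xi_nonneg hs hu hr ht
  refine Filter.eventually_atTop.symm.trans ⟨fun hΔ b₀ _ _ e f he hf => ?_, fun hΞ => ?_⟩
  · obtain ⟨b, hmod, hΔb, hb⟩ :=
      ((Nat.frequently_modEq hd.ne' b₀).and_eventually (hΔ.and hiff)).exists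
    exact (hb b₀ hmod.symm e f he hf).1 hΔb
  · filter_upwards [hiff] with b hb
    obtain ⟨h1, hle⟩ := repMod_mem_Icc hd b
    choose e he using fun i => exists_goodChoice (hs i) (repMod (dRT rr tt) b)
    choose f hf using fun j => exists_goodChoice (hu j) (repMod (dRT rr tt) b)
    exact (hb _ (repMod_modEq _ b) e f he hf).2 (hΞ _ h1 hle e f he hf)
end
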